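/- In A_q(n,n) the following hold for all 1 ≤ i,j ≤ n: (i) the left quantum minor (i,1,2,…,ĵ,…,n | 1,2,…,n)_l, whose row sequence starts with i followed by {1,…,n}∖{j} in increasing order, equals δ_{ij}·(−q)^{j−1}·det_q; (ii) the right quantum minor (1,2,…,n | i,1,2,…,ĵ,…,n)_r, whose column sequence starts with i followed by {1,…,n}∖{j} in increasing order, equals δ_{ij}·(−q)^{2i−j−1}·det_q. -/

import Mathlib

open scoped BigOperators

/-- Number of inversions of a permutation of `Fin k` (its Coxeter length). -/
def invCount {k : ℕ} (w : Equiv.Perm (Fin k)) : ℕ :=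
  ((Finset.univ : Finset (Fin k × Fin k)).filter
    (fun p => p.1 < p.2 ∧ w p.2 < w p.1)).card

/-- Ordered product of a tuple of elements in a (possibly noncommutative) monoid. -/
def oprod {A : Type*} [Monoid A] {k : ℕ} (g : Fin k → A) : A :=
  (List.ofFn g).prod

/-- The increasing enumeration of `{1,…,n} \ {i}` (0-based). -/
def omitIdx {n : ℕ} (i : Fin n) (t : Fin (n - 1)) : Fin n :=
  if (t : ℕ) < (i : ℕ) then ⟨t, by have := t.2; omega⟩ else ⟨(t : ℕ) + 1, by have := t.2; omega⟩

/-- The sequence `i, f 0, f 1, …` of length `n` (prepending an entry to a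
sequence of length `n-1`). -/
def consSeq {n : ℕ} (i : Fin n) (f : Fin (n - 1) → Fin n) : Fin n → Fin n :=
  fun t => if h : (t : ℕ) = 0 then i else f ⟨(t : ℕ) - 1, by have := t.2; omega⟩

/-- The defining relations of the quantum matrix bialgebra `A_q(n)`. -/
inductive QMRel (R : Type*) [CommRing R] (q : Rˣ) (n : ℕ) :
    FreeAlgebra R (Fin n × Fin n) → FreeAlgebra R (Fin n × Fin n) → Prop
  | col {i j k : Fin n} (h : i < j) :
      QMRel R q n (FreeAlgebra.ι R (i, k) * FreeAlgebra.ι R (j, k))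
        ((q : R) • (FreeAlgebra.ι R (j, k) * FreeAlgebra.ι R (i, k)))
  | row {k i j : Fin n} (h : i < j) :
      QMRel R q n (FreeAlgebra.ι R (k, i) * FreeAlgebra.ι R (k, j))
        ((q : R) • (FreeAlgebra.ι R (k, j) * FreeAlgebra.ι R (k, i)))
  | comm {i j k l : Fin n} (h1 : i < k) (h2 : l < j) :
      QMRel R q n (FreeAlgebra.ι R (i, j) * FreeAlgebra.ι R (k, l))
        (FreeAlgebra.ι R (k, l) * FreeAlgebra.ι R (i, j))
  | qcomm {i j k l : Fin n} (h1 : i < k) (h2 : j < l) :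
      QMRel R q n (FreeAlgebra.ι R (i, j) * FreeAlgebra.ι R (k, l))
        (FreeAlgebra.ι R (k, l) * FreeAlgebra.ι R (i, j) +
          ((q : R) - ((q⁻¹ : Rˣ) : R)) • (FreeAlgebra.ι R (i, l) * FreeAlgebra.ι R (k, j)))

/-- The quantum matrix bialgebra `A_q(n)`. -/
abbrev AqAlg (R : Type*) [CommRing R] (q : Rˣ) (n : ℕ) := RingQuot (QMRel R q n)

/-- The generator `x_{ij}` of `A_q(n)`. -/
def xq (R : Type*) [CommRing R] (q : Rˣ) (n : ℕ) (i j : Fin n) : AqAlg R q n :=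
  RingQuot.mkAlgHom R (QMRel R q n) (FreeAlgebra.ι R (i, j))

/-- The right quantum minor `(i_1 … i_k | j_1 … j_k)_r` for an increasing row
sequence and an arbitrary column sequence. -/
noncomputable def qMinorR (R : Type*) [CommRing R] (q : Rˣ) (n : ℕ) {k : ℕ}
    (rows cols : Fin k → Fin n) : AqAlg R q n :=
  ∑ w : Equiv.Perm (Fin k),
    (((-q) ^ invCount w : Rˣ) : R) • oprod (fun t => xq R q n (rows (w t)) (cols t))

/-- The left quantum minor `(i_1 … i_k | j_1 … j_k)_l` for an arbitrary row
sequence and an increasing column sequence. -/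
noncomputable def qMinorL (R : Type*) [CommRing R] (q : Rˣ) (n : ℕ) {k : ℕ}
    (rows cols : Fin k → Fin n) : AqAlg R q n :=
  ∑ w : Equiv.Perm (Fin k),
    (((-q) ^ invCount w : Rˣ) : R) • oprod (fun t => xq R q n (rows t) (cols (w t)))

/-- The quantum determinant. -/
noncomputable def detq (R : Type*) [CommRing R] (q : Rˣ) (n : ℕ) : AqAlg R q n :=
  qMinorR R q n (fun t => t) (fun t => t)

section Helpers

theorem oprod_succ' {A : Type*} [Monoid A] {k : ℕ} (g : Fin (k+1) → A) :
    oprod g = g 0 * oprod (fun t => g t.succ) := by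
  simp [oprod, List.ofFn_succ]

theorem oprod_split {A : Type*} [Monoid A] : ∀ (k : ℕ) (g : Fin k → A) (s t : Fin k),
    (t : ℕ) = s + 1 → ∃ P Q : A, ∀ g' : Fin k → A, (∀ u, u ≠ s → u ≠ t → g' u = g u) →
      oprod g' = P * (g' s * g' t) * Q := by
  intro k
  induction k with
  | zero => intro g s; exact s.elim0
  | succ k ih =>
    intro g s t hst
    obtain ⟨t', rfl⟩ : ∃ t', t = Fin.succ t' := Fin.exists_succ_eq.mpr (by
      intro h; rw [h] at hst; simp at hst) |>.imp fun _ h => h.symm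
    rcases Fin.eq_zero_or_eq_succ s with rfl | ⟨s', rfl⟩
    · cases k with
      | zero => exact t'.elim0
      | succ k =>
        have ht : t' = 0 := by apply Fin.ext; simpa using hst
        subst ht
        refine ⟨1, oprod (fun t => g t.succ.succ), fun g' h => ?_⟩
        rw [oprod_succ', oprod_succ', one_mul, mul_assoc]
        congr 2
        congr 1
        funext u
        exact h _ (Fin.succ_ne_zero _) (by simp [Fin.ext_iff])
    · obtain ⟨P, Q, h⟩ := ih (fun u => g u.succ) s' t' (by simpa using hst)
      refine ⟨g 0 * P, Q, fun g' h' => ?_⟩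
      rw [oprod_succ', h (fun u => g' u.succ), h' 0 (Fin.succ_ne_zero _).symm
        (Fin.succ_ne_zero _).symm]
      · simp only [mul_assoc]
      · intro u h1 h2
        exact h' _ (by simpa using h1) (by simpa using h2)

theorem invCount_inv' {k : ℕ} (w : Equiv.Perm (Fin k)) : invCount w⁻¹ = invCount w := by
  unfold invCount
  refine Finset.card_bij' (fun p _ => (w⁻¹ p.2, w⁻¹ p.1)) (fun p _ => (w p.2, w p.1)) ?_ ?_ ?_ ?_
  · intro p hp; simp at hp ⊢; exact ⟨hp.2, hp.1⟩
  · intro p hp; simp at hp ⊢; exact ⟨hp.2, hp.1⟩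
  · intro p hp; simp
  · intro p hp; simp

theorem swap_lt' {k : ℕ} {s t a b : Fin k} (hst : (t : ℕ) = s + 1) (hab : a < b)
    (h : ¬ (a = s ∧ b = t)) : Equiv.swap s t a < Equiv.swap s t b := by
  simp only [Equiv.swap_apply_def, Fin.lt_def, Fin.ext_iff] at *
  split_ifs <;> omega

theorem invCount_swap' {k : ℕ} (w : Equiv.Perm (Fin k)) (s t : Fin k) (hst : (t : ℕ) = s + 1)
    (hw : w s < w t) : invCount (w * Equiv.swap s t) = invCount w + 1 := by
  have hlt : s < t := by rw [Fin.lt_def]; omega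
  unfold invCount
  set σ := Equiv.swap s t with hσ
  have hσσ : ∀ a, σ (σ a) = a := fun a => Equiv.swap_apply_self s t a
  have : (Finset.univ.filter (fun p : Fin k × Fin k => p.1 < p.2 ∧ (w * σ) p.2 < (w * σ) p.1)) =
    insert (s, t) ((Finset.univ.filter (fun p : Fin k × Fin k => p.1 < p.2 ∧ w p.2 < w p.1)).map
      (σ.prodCongr σ).toEmbedding) := by
    ext ⟨a, b⟩
    simp only [Finset.mem_filter, Finset.mem_univ, true_and, Finset.mem_insert, Finset.mem_map,
      Prod.exists, Prod.mk.injEq, Equiv.toEmbedding_apply,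
      Equiv.prodCongr_apply, Prod.map_apply]
    constructor
    · rintro ⟨h1, h2⟩
      by_cases h : a = s ∧ b = t
      · exact Or.inl h
      · exact Or.inr ⟨σ a, σ b, ⟨swap_lt' hst h1 h, h2⟩, hσσ a, hσσ b⟩
    · rintro (⟨rfl, rfl⟩ | ⟨c, d, ⟨h1, h2⟩, rfl, rfl⟩)
      · refine ⟨hlt, ?_⟩
        simpa [hσ] using hw
      · refine ⟨swap_lt' hst h1 ?_, by simpa [hσσ] using h2⟩
        rintro ⟨rfl, rfl⟩
        exact absurd h2 (not_lt.mpr hw.le)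
  rw [this, Finset.card_insert_of_notMem, Finset.card_map]
  simp only [Finset.mem_map, Finset.mem_filter, Finset.mem_univ, true_and, Prod.exists,
    Equiv.toEmbedding_apply, Equiv.prodCongr_apply, Prod.map_apply, Prod.mk.injEq, not_exists]
  rintro c d ⟨⟨h1, h2⟩, h3, h4⟩
  have hc : c = t := by rw [← hσσ c, h3]; simp [hσ]
  have hd : d = s := by rw [← hσσ d, h4]; simp [hσ]
  rw [hc, hd] at h1
  exact absurd h1 (not_lt.mpr hlt.le)

theorem sum_pair' {k : ℕ} {A : Type*} [AddCommMonoid A] (F : Equiv.Perm (Fin k) → A)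
    (s t : Fin k) (hst : s ≠ t) :
    ∑ w, F w = ∑ w : Equiv.Perm (Fin k),
      if w s < w t then F w + F (w * Equiv.swap s t) else 0 := by
  have h2 : ∑ w : Equiv.Perm (Fin k), (if w s < w t then F (w * Equiv.swap s t) else 0)
      = ∑ w : Equiv.Perm (Fin k), (if w s < w t then 0 else F w) := by
    rw [← Equiv.sum_comp (Equiv.mulRight (Equiv.swap s t))]
    refine Finset.sum_congr rfl fun w _ => ?_
    have hne : w s ≠ w t := fun h => hst (w.injective h)
    simp only [Equiv.coe_mulRight, Equiv.Perm.mul_apply, Equiv.swap_apply_left,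
      Equiv.swap_apply_right, mul_assoc, Equiv.swap_mul_self, mul_one]
    rcases lt_or_gt_of_ne hne with h | h
    · rw [if_neg (not_lt.mpr h.le), if_pos h]
    · rw [if_pos h, if_neg (not_lt.mpr h.le)]
  have h3 : ∀ w : Equiv.Perm (Fin k), (if w s < w t then F w + F (w * Equiv.swap s t) else 0)
      = (if w s < w t then F w else 0) + (if w s < w t then F (w * Equiv.swap s t) else 0) := by
    intro w; split_ifs <;> simp
  simp_rw [h3]
  rw [Finset.sum_add_distrib, h2, ← Finset.sum_add_distrib]
  refine Finset.sum_congr rfl fun w _ => ?_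
  split_ifs <;> simp

variable {R : Type*} [CommRing R] (q : Rˣ) {A : Type*} [Ring A] [Algebra R A] {n : ℕ}

/-- generic left minor -/
noncomputable def gM (y : Fin n → Fin n → A) (f : Fin n → Fin n) : A :=
  ∑ w : Equiv.Perm (Fin n), (((-q) ^ invCount w : Rˣ) : R) • oprod (fun t => y (f t) (w t))

theorem gM_pair (y : Fin n → Fin n → A) (f : Fin n → Fin n) (s t : Fin n)
    (hst : (t : ℕ) = s + 1) (w : Equiv.Perm (Fin n)) (hw : w s < w t) :
    ∃ P Q : A, ∀ f' : Fin n → Fin n, (∀ u, u ≠ s → u ≠ t → f' u = f u) →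
     (((-q) ^ invCount w : Rˣ) : R) • oprod (fun t => y (f' t) (w t)) +
     (((-q) ^ invCount (w * Equiv.swap s t) : Rˣ) : R) •
        oprod (fun u => y (f' u) ((w * Equiv.swap s t) u)) =
     P * (y (f' s) (w s) * y (f' t) (w t) - (q : R) • (y (f' s) (w t) * y (f' t) (w s))) * Q := by
  obtain ⟨P, Q, h⟩ := oprod_split n (fun u => y (f u) (w u)) s t hst
  refine ⟨(((-q) ^ invCount w : Rˣ) : R) • P, Q, fun f' hf => ?_⟩
  rw [invCount_swap' w s t hst hw, h, h]
  · simp only [Equiv.Perm.mul_apply, Equiv.swap_apply_left, Equiv.swap_apply_right]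
    simp only [mul_sub, sub_mul, smul_mul_assoc, mul_smul_comm, smul_sub]
    simp only [pow_succ, Units.val_mul, Units.val_neg, mul_neg, neg_smul, smul_smul,
      sub_eq_add_neg]
    rw [mul_comm (q : R)]
  · intro u h1 h2
    simp only [Equiv.Perm.mul_apply, Equiv.swap_apply_of_ne_of_ne h1 h2, hf u h1 h2]
  · intro u h1 h2
    simp only [hf u h1 h2]

theorem gM_eq_zero (y : Fin n → Fin n → A)
    (h1 : ∀ a c d, c < d → y a c * y a d = (q : R) • (y a d * y a c))
    (f : Fin n → Fin n) (s t : Fin n) (hst : (t : ℕ) = s + 1) (hf : f s = f t) :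
    gM q y f = 0 := by
  unfold gM
  rw [sum_pair' _ s t (by intro h; rw [h] at hst; omega)]
  refine Finset.sum_eq_zero fun w _ => ?_
  split_ifs with hw
  · obtain ⟨P, Q, h⟩ := gM_pair q y f s t hst w hw
    rw [h f (fun _ _ _ => rfl), hf, h1 _ _ _ hw]
    simp
  · rfl

theorem gM_swap (y : Fin n → Fin n → A)
    (h2 : ∀ a b c d, a < b → c < d → y b c * y a d - (q : R) • (y b d * y a c) =
      (-q : R) • (y a c * y b d - (q : R) • (y a d * y b c)))
    (f f' : Fin n → Fin n) (s t : Fin n) (hst : (t : ℕ) = s + 1) (hf : f t < f s)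
    (hs : f' s = f t) (ht : f' t = f s) (hu : ∀ u, u ≠ s → u ≠ t → f' u = f u) :
    gM q y f = (-q : R) • gM q y f' := by
  have hne : s ≠ t := by intro h; rw [h] at hst; omega
  unfold gM
  rw [sum_pair' _ s t hne, sum_pair' (fun w : Equiv.Perm (Fin n) =>
    (((-q) ^ invCount w : Rˣ) : R) • oprod (fun t => y (f' t) (w t))) s t hne, Finset.smul_sum]
  refine Finset.sum_congr rfl fun w _ => ?_
  split_ifs with hw
  · obtain ⟨P, Q, h⟩ := gM_pair q y f s t hst w hw
    rw [h f (fun _ _ _ => rfl), h f' hu, hs, ht, h2 _ _ _ _ hf hw]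
    simp only [mul_smul_comm, smul_mul_assoc]
  · simp

/-- the sequence with `i` placed at position `m` -/
def seqS (i j : Fin n) (m : ℕ) : Fin n → Fin n := fun t =>
  ⟨min (if (t : ℕ) < m then (if (t : ℕ) < j then t else t + 1) else if (t : ℕ) = m then i else
    (if (t : ℕ) - 1 < j then t - 1 else t)) (n - 1), by have := t.2; omega⟩

theorem gM_seqS (y : Fin n → Fin n → A)
    (h2 : ∀ a b c d, a < b → c < d → y b c * y a d - (q : R) • (y b d * y a c) =
      (-q : R) • (y a c * y b d - (q : R) • (y a d * y b c)))
    (i j : Fin n) (m : ℕ) (hm : m ≤ i) (hj : i ≤ j ∨ m < i) :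
    gM q y (seqS i j 0) = ((-q : R)) ^ m • gM q y (seqS i j m) := by
  induction m with
  | zero => simp
  | succ m ih =>
    have hi := i.2
    have hj2 := j.2
    rw [ih (by omega) (by omega), pow_succ, mul_smul]
    congr 1
    have hj' : (i : ℕ) ≤ j ∨ m + 1 < i := hj
    refine gM_swap q y h2 _ _ ⟨m, by omega⟩ ⟨m+1, by omega⟩ rfl ?_ ?_ ?_ ?_
    · simp only [seqS, Fin.lt_def]; split_ifs <;> omega
    · simp only [seqS, Fin.ext_iff]; split_ifs <;> omega
    · simp only [seqS, Fin.ext_iff]; split_ifs <;> omega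
    · intro u hu1 hu2
      simp only [seqS, Fin.ext_iff, ne_eq] at *; split_ifs <;> omega

theorem gM_main (y : Fin n → Fin n → A)
    (h1 : ∀ a c d, c < d → y a c * y a d = (q : R) • (y a d * y a c))
    (h2 : ∀ a b c d, a < b → c < d → y b c * y a d - (q : R) • (y b d * y a c) =
      (-q : R) • (y a c * y b d - (q : R) • (y a d * y b c)))
    (i j : Fin n) :
    gM q y (consSeq i (omitIdx j)) =
      if i = j then ((-q : R)) ^ (i : ℕ) • gM q y (fun t => t) else 0 := by
  have hi := i.2
  have hj2 := j.2
  have e : consSeq i (omitIdx j) = seqS i j 0 := by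
    funext t
    have := t.2
    simp only [seqS, consSeq, omitIdx, Fin.ext_iff]
    split_ifs <;> (try simp only []) <;> omega
  rw [e]
  rcases lt_trichotomy i j with h | h | h
  · rw [if_neg h.ne, gM_seqS q y h2 i j i le_rfl (Or.inl h.le)]
    rw [Fin.lt_def] at h
    rw [gM_eq_zero q y h1 _ i ⟨i + 1, by omega⟩ rfl, smul_zero]
    simp only [seqS, Fin.ext_iff]; split_ifs <;> omega
  · subst h
    rw [if_pos rfl, gM_seqS q y h2 i i i le_rfl (Or.inl le_rfl)]
    congr 2
    funext t
    have := t.2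
    simp only [seqS, Fin.ext_iff]; split_ifs <;> omega
  · rw [if_neg h.ne']
    rw [Fin.lt_def] at h
    rw [gM_seqS q y h2 i j (i - 1) (by omega) (Or.inr (by omega)),
      gM_eq_zero q y h1 _ ⟨i - 1, by omega⟩ i (by simp; omega), smul_zero]
    simp only [seqS, Fin.ext_iff]; split_ifs <;> omega

theorem prod_insert' {B α : Type*} [Monoid B] [LinearOrder α] (g : α → B) (a : α) :
    ∀ (l : List α), (∀ b ∈ l, a ≤ b ∨ Commute (g a) (g b)) →
    ((l.orderedInsert (· ≤ ·) a).map g).prod = g a * (l.map g).prod := by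
  intro l
  induction l with
  | nil => simp
  | cons b l ih =>
    intro h
    rw [List.orderedInsert_cons]
    split_ifs with hab
    · simp
    · have hc := (h b (by simp)).resolve_left hab
      rw [List.map_cons, List.prod_cons, ih (fun c hc => h c (by simp [hc])), List.map_cons,
        List.prod_cons, ← mul_assoc, ← mul_assoc, hc.eq]

theorem prod_sort' {B α : Type*} [Monoid B] [LinearOrder α] (g : α → B) :
    ∀ (l : List α), l.Pairwise (fun a b => a ≤ b ∨ Commute (g a) (g b)) →
    ((l.insertionSort (· ≤ ·)).map g).prod = (l.map g).prod := by
  intro l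
  induction l with
  | nil => simp
  | cons b l ih =>
    intro h
    rw [List.pairwise_cons] at h
    rw [List.insertionSort_cons, prod_insert', ih h.2, List.map_cons, List.prod_cons]
    intro c hc
    exact h.1 c (by simpa using hc)

theorem oprod_transpose (y : Fin n → Fin n → A)
    (h : ∀ a b c d, a < b → d < c → y a c * y b d = y b d * y a c) (w : Equiv.Perm (Fin n)) :
    oprod (fun t => y t (w t)) = oprod (fun t => y (w⁻¹ t) t) := by
  have hs : (List.ofFn w).insertionSort (· ≤ ·) = List.finRange n := by
    apply List.Perm.eq_of_pairwise (le := (· ≤ ·))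
    · intro a b _ _; exact le_antisymm
    · exact List.pairwise_insertionSort _ _
    · exact (List.pairwise_lt_finRange n).imp le_of_lt
    · refine (List.perm_insertionSort _ _).trans ?_
      rw [List.perm_ext_iff_of_nodup (List.nodup_ofFn.mpr w.injective) (List.nodup_finRange n)]
      intro a
      simp only [List.mem_ofFn, List.mem_finRange, iff_true]
      exact w.surjective a
  have := prod_sort' (fun t => y (w⁻¹ t) t) (List.ofFn w) (by
    rw [List.pairwise_ofFn]
    intro a b hab
    rcases le_or_gt (w a) (w b) with h' | h'
    · exact Or.inl h'
    · right
      have hinv : ∀ a, w⁻¹ (w a) = a := fun a => w.symm_apply_apply a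
      simp only [Commute, SemiconjBy, hinv]
      exact h _ _ _ _ hab h')
  rw [hs] at this
  unfold oprod
  rw [List.map_ofFn] at this
  rw [List.ofFn_eq_map (f := fun t => y (w⁻¹ t) t), this]
  simp [Function.comp_def]

theorem gM_transpose (y : Fin n → Fin n → A)
    (h : ∀ a b c d, a < b → d < c → y a c * y b d = y b d * y a c) :
    gM q y (fun t => t) = gM q (fun a b => y b a) (fun t => t) := by
  unfold gM
  rw [← Equiv.sum_comp (Equiv.inv (Equiv.Perm (Fin n)))
    (fun w => (((-q) ^ invCount w : Rˣ) : R) • oprod (fun t => y (w t) t))]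
  refine Finset.sum_congr rfl fun w _ => ?_
  rw [oprod_transpose y h]
  simp only [Equiv.inv_apply, invCount_inv']

end Helpers

theorem xq_col (R : Type*) [CommRing R] (q : Rˣ) (n : ℕ) (a b c : Fin n) (h : a < b) :
    xq R q n a c * xq R q n b c = (q : R) • (xq R q n b c * xq R q n a c) := by
  simpa [xq] using RingQuot.mkAlgHom_rel R (QMRel.col (R := R) (q := q) (k := c) h)

theorem xq_row (R : Type*) [CommRing R] (q : Rˣ) (n : ℕ) (a b c : Fin n) (h : a < b) :
    xq R q n c a * xq R q n c b = (q : R) • (xq R q n c b * xq R q n c a) := by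
  simpa [xq] using RingQuot.mkAlgHom_rel R (QMRel.row (R := R) (q := q) (k := c) h)

theorem xq_comm (R : Type*) [CommRing R] (q : Rˣ) (n : ℕ) (a b c d : Fin n) (h : a < b)
    (h' : d < c) :
    xq R q n a c * xq R q n b d = xq R q n b d * xq R q n a c := by
  simpa [xq] using RingQuot.mkAlgHom_rel R (QMRel.comm (R := R) (q := q) h h')

theorem xq_qcomm (R : Type*) [CommRing R] (q : Rˣ) (n : ℕ) (a b c d : Fin n) (h : a < b)
    (h' : c < d) :
    xq R q n a c * xq R q n b d = xq R q n b d * xq R q n a c +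
      ((q : R) - ((q⁻¹ : Rˣ) : R)) • (xq R q n a d * xq R q n b c) := by
  have := RingQuot.mkAlgHom_rel R (QMRel.qcomm (R := R) (q := q) h h')
  rw [map_add, map_smul] at this
  simpa only [map_mul, xq] using this

theorem xq_swap (R : Type*) [CommRing R] (q : Rˣ) (n : ℕ) (a b c d : Fin n) (h : a < b)
    (h' : c < d) :
    xq R q n b c * xq R q n a d - (q : R) • (xq R q n b d * xq R q n a c) =
      (-q : R) • (xq R q n a c * xq R q n b d - (q : R) • (xq R q n a d * xq R q n b c)) := by
  rw [xq_qcomm R q n a b c d h h', xq_comm R q n a b d c h h']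
  generalize xq R q n b c * xq R q n a d = u
  generalize xq R q n b d * xq R q n a c = v
  have hq : (q : R) * ((q⁻¹ : Rˣ) : R) = 1 := q.mul_inv
  have : (-q : R) • (v + ((q : R) - ((q⁻¹ : Rˣ) : R)) • u - (q : R) • u)
     = ((q : R) * ((q⁻¹ : Rˣ) : R)) • u - (q : R) • v := by module
  rw [this, hq, one_smul]

/-- in `A_q(n,n)`, for all `1 ≤ i,j ≤ n`,
`(i,1,…,ĵ,…,n | 1,…,n)_l = δ_{ij}·(−q)^{j−1}·det_q` and
`(1,…,n | i,1,…,ĵ,…,n)_r = δ_{ij}·(−q)^{2i−j−1}·det_q`. -/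
theorem stmt8 (R : Type*) [CommRing R] (q : Rˣ) (n : ℕ) (hn : 1 ≤ n) (i j : Fin n) :
    qMinorL R q n (consSeq i (omitIdx j)) (fun t => t) =
      (if i = j then (((-q) ^ (j : ℕ) : Rˣ) : R) • detq R q n else 0) ∧
    qMinorR R q n (fun t => t) (consSeq i (omitIdx j)) =
      (if i = j then (((-q) ^ (2 * (i : ℕ) - (j : ℕ) : ℤ) : Rˣ) : R) • detq R q n else 0) := by
  have hL := gM_main q (xq R q n) (fun a c d h => xq_row R q n c d a h) (xq_swap R q n) i j
  have hR := gM_main q (fun a b => xq R q n b a) (fun a c d h => xq_col R q n c d a h)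
    (fun a b c d h h' => by
      have := xq_swap R q n c d a b h' h
      rw [xq_comm R q n c d b a h' h] at this ⊢
      exact this) i j
  have hT := gM_transpose q (xq R q n) (xq_comm R q n)
  have hd : detq R q n = gM q (fun a b => xq R q n b a) (fun t => t) := rfl
  refine ⟨hL.trans ?_, hR.trans ?_⟩
  · rw [hT, ← hd]
    split_ifs with h
    · subst h; simp
    · rfl
  · rw [← hd]
    split_ifs with h
    · subst h
      rw [show (2 * (i : ℕ) - (i : ℕ) : ℤ) = ((i : ℕ) : ℤ) by ring, zpow_natCast]
      simp
    · rfl
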